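/- arXiv:1312.4564 — 4 statements merged into one kernel-verified Lean document; each statement's English description precedes it below -/
import Mathlib

section
/- (Lemma 1) In the ADMM setting below, let (w_{t+1}, v_{t+1}, θ_{t+1}) be produced from (w_t, v_t, θ_t) by one iteration of the adaptive stochastic ADMM update with vector g_t and symmetric positive definite matrix H_t, let h_t be a subgradient of ℓ at w_t, and δ_t := g_t − h_t. Then for all w ∈ W, v ∈ V, θ ∈ ℝ^m: ℓ(w_t) + φ(v_{t+1}) − ℓ(w) − φ(v) + ⟨w_{t+1} − w, −Aᵀθ_{t+1}⟩ + ⟨v_{t+1} − v, −Bᵀθ_{t+1}⟩ + ⟨θ_{t+1} − θ, Aw_{t+1} + Bv_{t+1} − b⟩ ≤ (η/2)⟨g_t, H_t⁻¹g_t⟩ + (1/(2η))(‖w_t − w‖²_{H_t} − ‖w_{t+1} − w‖²_{H_t}) + (β/2)(‖Aw + Bv_t − b‖² − ‖Aw + Bv_{t+1} − b‖²) + ⟨δ_t, w − w_t⟩ + (1/(2β))(‖θ − θ_t‖² − ‖θ − θ_{t+1}‖²). -/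
/-!
The first-order optimality conditions of the two minimization steps are variational inequalities:
with `θ' = θ_t - β (A w' + B v' - b)`,

* `0 ≤ ⟨g, w - w'⟩ - ⟨θ' + β B (v' - v_t), A (w - w')⟩ + (1/η) ⟨w - w', H (w' - w_t)⟩`,
* `0 ≤ φ v - φ v' - ⟨θ', B (v - v')⟩`.

No differentiability is needed: each follows by comparing the minimizer with a point of the segment
towards the competitor and letting the step tend to `0` (`nonneg_of_forall_step`). Added to the
subgradient inequality for `ℓ`, they leave four terms: the inner products in `H` and in the
multipliers are rewritten by the three-point identity, `⟨g, w_t - w'⟩` is absorbed by the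
Fenchel–Young inequality for `H` (`dotProduct_le_fenchelYoung`), and the cross term
`β ⟨B (v_t - v'), A (w - w')⟩` by a four-point identity (`cross_term_le`), whose loss
`‖A w' + B v' - b‖²` is paid for by the multiplier identity.
-/

open Matrix Finset

/-- Squared Euclidean norm of a vector. -/
def enormSq {n : ℕ} (x : Fin n → ℝ) : ℝ := x ⬝ᵥ x

/-- Euclidean norm of a vector. -/
noncomputable def enorm {n : ℕ} (x : Fin n → ℝ) : ℝ := Real.sqrt (x ⬝ᵥ x)

/-- The squared `H`-norm `‖x‖²_H = xᵀ H x`. -/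
def normHsq {n : ℕ} (H : Matrix (Fin n) (Fin n) ℝ) (x : Fin n → ℝ) : ℝ := x ⬝ᵥ H.mulVec x

/-- `h` is a subgradient of `ℓ` at `w₀`: `ℓ(u) ≥ ℓ(w₀) + ⟨h, u − w₀⟩` for all `u`. -/
def IsSubgradientAt {n : ℕ} (ℓ : (Fin n → ℝ) → ℝ) (h : Fin n → ℝ) (w₀ : Fin n → ℝ) : Prop :=
  ∀ u, ℓ w₀ + h ⬝ᵥ (u - w₀) ≤ ℓ u

/-- One iteration of the adaptive stochastic ADMM update from `(w, v, θ)` with (sub)gradient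
estimate `g` and proximal matrix `H`, producing `(w', v', θ')`:
`w'` minimizes `⟨g, ·⟩ − ⟨θ, A·⟩ + (β/2)‖A· + Bv − b‖² + (1/(2η))‖· − w‖²_H` over `W`;
`v'` minimizes `φ(·) − ⟨θ, B·⟩ + (β/2)‖Aw' + B· − b‖²` over `V`;
`θ' = θ − β(Aw' + Bv' − b)`. -/
def ADMMStep {d₁ d₂ m : ℕ} (W : Set (Fin d₁ → ℝ)) (V : Set (Fin d₂ → ℝ))
    (φ : (Fin d₂ → ℝ) → ℝ) (A : Matrix (Fin m) (Fin d₁) ℝ) (B : Matrix (Fin m) (Fin d₂) ℝ)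
    (b : Fin m → ℝ) (β η : ℝ) (g : Fin d₁ → ℝ) (H : Matrix (Fin d₁) (Fin d₁) ℝ)
    (w : Fin d₁ → ℝ) (v : Fin d₂ → ℝ) (θ : Fin m → ℝ)
    (w' : Fin d₁ → ℝ) (v' : Fin d₂ → ℝ) (θ' : Fin m → ℝ) : Prop :=
  (w' ∈ W ∧ ∀ u ∈ W,
      g ⬝ᵥ w' - θ ⬝ᵥ A.mulVec w' + β / 2 * enormSq (A.mulVec w' + B.mulVec v - b)
          + 1 / (2 * η) * normHsq H (w' - w)
        ≤ g ⬝ᵥ u - θ ⬝ᵥ A.mulVec u + β / 2 * enormSq (A.mulVec u + B.mulVec v - b)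
          + 1 / (2 * η) * normHsq H (u - w)) ∧
  (v' ∈ V ∧ ∀ u ∈ V,
      φ v' - θ ⬝ᵥ B.mulVec v' + β / 2 * enormSq (A.mulVec w' + B.mulVec v' - b)
        ≤ φ u - θ ⬝ᵥ B.mulVec u + β / 2 * enormSq (A.mulVec w' + B.mulVec u - b)) ∧
  θ' = θ - β • (A.mulVec w' + B.mulVec v' - b)

section Helpers

/-- A function `s ↦ s D + s² Q` that is nonnegative on `(0, 1]` has nonnegative slope at `0`. -/
lemma nonneg_of_forall_step {D Q : ℝ}
    (hs : ∀ s : ℝ, 0 < s → s ≤ 1 → 0 ≤ s * D + s ^ 2 * Q) : 0 ≤ D := by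
  by_contra! hD
  have hpos : 0 < |Q| + |D| + 1 := by positivity
  -- This step satisfies `s |Q| < |D|`, so the linear term dominates.
  have h1 := hs (|D| / (|Q| + |D| + 1)) (by have := abs_pos.mpr hD.ne; positivity)
    (by rw [div_le_one hpos]; linarith [abs_nonneg Q])
  have hs0 : 0 < |D| / (|Q| + |D| + 1) := by have := abs_pos.mpr hD.ne; positivity
  have hs1 : |D| / (|Q| + |D| + 1) * (|Q| + |D| + 1) = |D| := div_mul_cancel₀ _ hpos.ne'
  set s := |D| / (|Q| + |D| + 1)
  have h2 : 0 ≤ D + s * Q := by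
    by_contra! hneg
    nlinarith
  rw [abs_of_neg hD] at hs1
  nlinarith [mul_le_mul_of_nonneg_left (le_abs_self Q) hs0.le]

lemma enormSq_nonneg {n : ℕ} (x : Fin n → ℝ) : 0 ≤ enormSq x := by
  unfold enormSq dotProduct
  exact Finset.sum_nonneg fun i _ => mul_self_nonneg (x i)

lemma enormSq_add_smul {n : ℕ} (x d : Fin n → ℝ) (s : ℝ) :
    enormSq (x + s • d) = enormSq x + 2 * s * (x ⬝ᵥ d) + s ^ 2 * enormSq d := by
  simp only [enormSq, add_dotProduct, dotProduct_add, smul_dotProduct, dotProduct_smul,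
    smul_eq_mul, dotProduct_comm d x]
  ring

lemma dotProduct_mulVec_symm {n : ℕ} {H : Matrix (Fin n) (Fin n) ℝ} (hH : H.IsSymm)
    (x y : Fin n → ℝ) : x ⬝ᵥ H.mulVec y = y ⬝ᵥ H.mulVec x := by
  rw [dotProduct_mulVec, ← mulVec_transpose, hH.eq, dotProduct_comm]

lemma normHsq_add_smul {n : ℕ} {H : Matrix (Fin n) (Fin n) ℝ} (hH : H.IsSymm)
    (x d : Fin n → ℝ) (s : ℝ) :
    normHsq H (x + s • d) = normHsq H x + 2 * s * (d ⬝ᵥ H.mulVec x) + s ^ 2 * normHsq H d := by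
  simp only [normHsq, mulVec_add, mulVec_smul, add_dotProduct, dotProduct_add, smul_dotProduct,
    dotProduct_smul, smul_eq_mul, dotProduct_mulVec_symm hH x d]
  ring

/-- Fenchel–Young for the quadratic form of `H`: expand `0 ≤ ‖x - η H⁻¹ g‖²_H`. -/
lemma dotProduct_le_fenchelYoung {n : ℕ} {H : Matrix (Fin n) (Fin n) ℝ} (hH : H.IsSymm)
    (hpd : H.PosDef) {η : ℝ} (hη : 0 < η) (g x : Fin n → ℝ) :
    g ⬝ᵥ x ≤ η / 2 * (g ⬝ᵥ H⁻¹.mulVec g) + 1 / (2 * η) * normHsq H x := by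
  have hdet : IsUnit H.det := (Matrix.isUnit_iff_isUnit_det H).mp hpd.isUnit
  have hinv : H.mulVec (H⁻¹.mulVec g) = g := by
    rw [mulVec_mulVec, Matrix.mul_nonsing_inv _ hdet, one_mulVec]
  have h0 : 0 ≤ normHsq H (x + (-η) • H⁻¹.mulVec g) := by
    simpa [normHsq] using hpd.posSemidef.dotProduct_mulVec_nonneg (x + (-η) • H⁻¹.mulVec g)
  rw [normHsq_add_smul hH, dotProduct_mulVec_symm hH _ x, hinv, normHsq, normHsq, hinv,
    dotProduct_comm x g, dotProduct_comm _ g] at h0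
  have h1 : 0 ≤ 1 / (2 * η) * (x ⬝ᵥ H.mulVec x + 2 * -η * (g ⬝ᵥ x)
      + (-η) ^ 2 * (g ⬝ᵥ H⁻¹.mulVec g)) := mul_nonneg (by positivity) h0
  have h2 : 1 / (2 * η) * (x ⬝ᵥ H.mulVec x + 2 * -η * (g ⬝ᵥ x)
      + (-η) ^ 2 * (g ⬝ᵥ H⁻¹.mulVec g))
      = η / 2 * (g ⬝ᵥ H⁻¹.mulVec g) + 1 / (2 * η) * normHsq H x - g ⬝ᵥ x := by
    rw [normHsq]; field_simp; ring
  linarith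

/-- The four-point identity
`2 ⟨x - y, p - p'⟩ = ‖p + x - b‖² - ‖p + y - b‖² - ‖p' + x - b‖² + ‖p' + y - b‖²`, with its
nonpositive term discarded. -/
lemma cross_term_le {m : ℕ} (p p' x y b : Fin m → ℝ) :
    (x - y) ⬝ᵥ (p - p') ≤
      1 / 2 * (enormSq (p + x - b) - enormSq (p + y - b) + enormSq (p' + y - b)) := by
  have h0 := enormSq_nonneg (p' + x - b)
  simp only [enormSq, add_dotProduct, dotProduct_add, sub_dotProduct, dotProduct_sub] at *
  linarith [dotProduct_comm x p, dotProduct_comm x p', dotProduct_comm y p, dotProduct_comm y p',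
    dotProduct_comm x b, dotProduct_comm y b, dotProduct_comm p b, dotProduct_comm p' b]

/-- Three-point identity for the multipliers, where `r` is the constraint residual. -/
lemma multiplier_identity {m : ℕ} {β : ℝ} (hβ : 0 < β) (θ θt r : Fin m → ℝ) :
    (θt - β • r - θ) ⬝ᵥ r =
      1 / (2 * β) * (enormSq (θ - θt) - enormSq (θ - (θt - β • r))) - β / 2 * enormSq r := by
  have e : θ - (θt - β • r) = (θ - θt) + β • r := by abel
  rw [e, enormSq_add_smul]
  simp only [enormSq, sub_dotProduct, smul_dotProduct, smul_eq_mul]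
  field_simp
  ring

/-- Three-point identity in the `H`-norm. -/
lemma normHsq_three_point {n : ℕ} {H : Matrix (Fin n) (Fin n) ℝ} (hH : H.IsSymm)
    (w w' wt : Fin n → ℝ) :
    2 * ((w - w') ⬝ᵥ H.mulVec (w' - wt)) =
      normHsq H (wt - w) - normHsq H (w' - w) - normHsq H (wt - w') := by
  simp only [normHsq, mulVec_sub, sub_dotProduct, dotProduct_sub]
  linarith [dotProduct_mulVec_symm hH w w', dotProduct_mulVec_symm hH w wt,
    dotProduct_mulVec_symm hH w' wt]

/-- First-order optimality condition of the `w`-step. -/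
lemma w_step_optimality {d m : ℕ} {W : Set (Fin d → ℝ)} (hW : Convex ℝ W)
    {A : Matrix (Fin m) (Fin d) ℝ} {c θ : Fin m → ℝ} {β η : ℝ} {g w w' : Fin d → ℝ}
    {H : Matrix (Fin d) (Fin d) ℝ} (hH : H.IsSymm) (hw' : w' ∈ W)
    (hmin : ∀ u ∈ W,
      g ⬝ᵥ w' - θ ⬝ᵥ A.mulVec w' + β / 2 * enormSq (A.mulVec w' + c)
          + 1 / (2 * η) * normHsq H (w' - w)
        ≤ g ⬝ᵥ u - θ ⬝ᵥ A.mulVec u + β / 2 * enormSq (A.mulVec u + c)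
          + 1 / (2 * η) * normHsq H (u - w))
    {u : Fin d → ℝ} (hu : u ∈ W) :
    0 ≤ g ⬝ᵥ (u - w') - (θ - β • (A.mulVec w' + c)) ⬝ᵥ A.mulVec (u - w')
      + 1 / (2 * η) * (2 * ((u - w') ⬝ᵥ H.mulVec (w' - w))) := by
  refine nonneg_of_forall_step (Q := β / 2 * enormSq (A.mulVec (u - w'))
    + 1 / (2 * η) * normHsq H (u - w')) fun s hs0 hs1 => ?_
  have h1 := hmin _ (hW.add_smul_sub_mem hw' hu ⟨hs0.le, hs1⟩)
  have e1 : A.mulVec (w' + s • (u - w')) + c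
      = (A.mulVec w' + c) + s • A.mulVec (u - w') := by
    rw [mulVec_add, mulVec_smul]; abel
  have e2 : w' + s • (u - w') - w = (w' - w) + s • (u - w') := by abel
  rw [e1, e2, enormSq_add_smul, normHsq_add_smul hH, mulVec_add, mulVec_smul] at h1
  rw [sub_dotProduct, smul_dotProduct]
  simp only [dotProduct_add θ, dotProduct_add g, dotProduct_smul, smul_eq_mul] at h1 ⊢
  linarith

/-- First-order optimality condition of the `v`-step. -/
lemma v_step_optimality {d m : ℕ} {V : Set (Fin d → ℝ)} (hV : Convex ℝ V)
    {φ : (Fin d → ℝ) → ℝ} (hφ : ConvexOn ℝ Set.univ φ)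
    {B : Matrix (Fin m) (Fin d) ℝ} {c θ : Fin m → ℝ} {β : ℝ} {v' : Fin d → ℝ} (hv' : v' ∈ V)
    (hmin : ∀ u ∈ V,
      φ v' - θ ⬝ᵥ B.mulVec v' + β / 2 * enormSq (B.mulVec v' + c)
        ≤ φ u - θ ⬝ᵥ B.mulVec u + β / 2 * enormSq (B.mulVec u + c))
    {u : Fin d → ℝ} (hu : u ∈ V) :
    0 ≤ φ u - φ v' - (θ - β • (B.mulVec v' + c)) ⬝ᵥ B.mulVec (u - v') := by
  refine nonneg_of_forall_step (Q := β / 2 * enormSq (B.mulVec (u - v'))) fun s hs0 hs1 => ?_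
  have h1 := hmin _ (hV.add_smul_sub_mem hv' hu ⟨hs0.le, hs1⟩)
  have h2 := hφ.2 (Set.mem_univ v') (Set.mem_univ u) (sub_nonneg.mpr hs1) hs0.le (by ring)
  have e0 : (1 - s) • v' + s • u = v' + s • (u - v') := by module
  have e1 : B.mulVec (v' + s • (u - v')) + c
      = (B.mulVec v' + c) + s • B.mulVec (u - v') := by
    rw [mulVec_add, mulVec_smul]; abel
  rw [e0] at h2
  rw [e1, enormSq_add_smul, mulVec_add, mulVec_smul] at h1
  rw [sub_dotProduct, smul_dotProduct]
  simp only [dotProduct_add θ, dotProduct_smul, smul_eq_mul] at h1 h2 ⊢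
  linarith

end Helpers

/-- Lemma 1: per-iteration inequality for adaptive stochastic ADMM. -/
theorem admm_per_iteration_inequality {d₁ d₂ m : ℕ}
    (W : Set (Fin d₁ → ℝ)) (hW : Convex ℝ W)
    (V : Set (Fin d₂ → ℝ)) (hV : Convex ℝ V)
    (ℓ : (Fin d₁ → ℝ) → ℝ) (hℓ : ConvexOn ℝ Set.univ ℓ)
    (φ : (Fin d₂ → ℝ) → ℝ) (hφ : ConvexOn ℝ Set.univ φ)
    (A : Matrix (Fin m) (Fin d₁) ℝ) (B : Matrix (Fin m) (Fin d₂) ℝ) (b : Fin m → ℝ)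
    (β η : ℝ) (hβ : 0 < β) (hη : 0 < η)
    (g : Fin d₁ → ℝ) (H : Matrix (Fin d₁) (Fin d₁) ℝ) (hHsymm : H.IsSymm) (hHpd : H.PosDef)
    (wt : Fin d₁ → ℝ) (vt : Fin d₂ → ℝ) (θt : Fin m → ℝ) (hwt : wt ∈ W) (hvt : vt ∈ V)
    (wt1 : Fin d₁ → ℝ) (vt1 : Fin d₂ → ℝ) (θt1 : Fin m → ℝ)
    (hstep : ADMMStep W V φ A B b β η g H wt vt θt wt1 vt1 θt1)
    (h : Fin d₁ → ℝ) (hsub : IsSubgradientAt ℓ h wt) :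
    ∀ w ∈ W, ∀ v ∈ V, ∀ θ : Fin m → ℝ,
      ℓ wt + φ vt1 - ℓ w - φ v
        + (wt1 - w) ⬝ᵥ (-(Aᵀ.mulVec θt1))
        + (vt1 - v) ⬝ᵥ (-(Bᵀ.mulVec θt1))
        + (θt1 - θ) ⬝ᵥ (A.mulVec wt1 + B.mulVec vt1 - b)
      ≤ η / 2 * (g ⬝ᵥ H⁻¹.mulVec g)
        + 1 / (2 * η) * (normHsq H (wt - w) - normHsq H (wt1 - w))
        + β / 2 * (enormSq (A.mulVec w + B.mulVec vt - b)
            - enormSq (A.mulVec w + B.mulVec vt1 - b))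
        + (g - h) ⬝ᵥ (w - wt)
        + 1 / (2 * β) * (enormSq (θ - θt) - enormSq (θ - θt1)) := by
  intro w hw v hv θ
  obtain ⟨⟨hw', hwmin⟩, ⟨hv', hvmin⟩, rfl⟩ := hstep
  have hvi_w := w_step_optimality (c := B.mulVec vt - b) hW hHsymm hw'
    (by simpa only [add_sub_assoc] using hwmin) hw
  have hvi_v := v_step_optimality (c := A.mulVec wt1 - b) (θ := θt) (β := β) hV hφ hv'
    (fun u hu => by
      have h1 := hvmin u hu
      have e : ∀ x : Fin d₂ → ℝ, A.mulVec wt1 + B.mulVec x - b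
          = B.mulVec x + (A.mulVec wt1 - b) := fun x => by abel
      rwa [e, e] at h1) hv
  have e : B.mulVec vt1 + (A.mulVec wt1 - b) = A.mulVec wt1 + B.mulVec vt1 - b := by abel
  rw [e] at hvi_v
  have hsubg := hsub w
  have hfy := dotProduct_le_fenchelYoung hHsymm hHpd hη g (wt - wt1)
  have hcross := mul_le_mul_of_nonneg_left
    (cross_term_le (A.mulVec w) (A.mulVec wt1) (B.mulVec vt) (B.mulVec vt1) b) hβ.le
  have hmult := multiplier_identity hβ θ θt (A.mulVec wt1 + B.mulVec vt1 - b)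
  rw [normHsq_three_point hHsymm] at hvi_w
  set r := A.mulVec wt1 + B.mulVec vt1 - b with hr
  -- The gradient of the `w`-step uses `vt` where the new multiplier uses `vt1`.
  have hθ : θt - β • (A.mulVec wt1 + (B.mulVec vt - b))
      = (θt - β • r) - β • (B.mulVec vt - B.mulVec vt1) := by
    rw [hr]; module
  rw [hθ, sub_dotProduct (θt - β • r), smul_dotProduct, smul_eq_mul] at hvi_w
  have hA : (wt1 - w) ⬝ᵥ (-(Aᵀ.mulVec (θt - β • r))) = (θt - β • r) ⬝ᵥ A.mulVec (w - wt1) := by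
    rw [mulVec_transpose, dotProduct_mulVec, dotProduct_neg, ← neg_dotProduct, neg_sub,
      dotProduct_comm]
  have hB : (vt1 - v) ⬝ᵥ (-(Bᵀ.mulVec (θt - β • r))) = (θt - β • r) ⬝ᵥ B.mulVec (v - vt1) := by
    rw [mulVec_transpose, dotProduct_mulVec, dotProduct_neg, ← neg_dotProduct, neg_sub,
      dotProduct_comm]
  rw [hA, hB, hmult]
  rw [← mulVec_sub A w wt1] at hcross
  have hg : g ⬝ᵥ (w - wt1) = g ⬝ᵥ (w - wt) + g ⬝ᵥ (wt - wt1) := by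
    rw [← dotProduct_add, sub_add_sub_cancel]
  rw [sub_dotProduct g h]
  linarith
end

section
/- Let a_1, …, a_T be nonnegative real numbers. Then ∑_{t=1}^T a_t/√(a_1 + ⋯ + a_t) ≤ 2√(a_1 + ⋯ + a_T), where any term whose denominator √(a_1+⋯+a_t) is zero is interpreted as 0 (such a term necessarily has a_t = 0). -/
open Finset

/-- A single term is dominated by twice the increment of `√` over the partial sums, so the
sum telescopes: with `x = √S` and `y = √(S + b)` one has
`b = (y - x) * (y + x) ≤ 2 * (y - x) * y`. -/
lemma div_sqrt_add_le {S b : ℝ} (hS : 0 ≤ S) (hb : 0 ≤ b) :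
    b / √(S + b) ≤ 2 * (√(S + b) - √S) := by
  have hxy : √S ≤ √(S + b) := Real.sqrt_le_sqrt (by linarith)
  -- If `√(S + b) = 0`, the left side is a division by zero, hence `0`.
  rcases (Real.sqrt_nonneg (S + b)).eq_or_lt with h | h
  · rw [← h, div_zero]
    linarith
  · rw [div_le_iff₀ h]
    nlinarith [Real.sq_sqrt hS, Real.sq_sqrt (add_nonneg hS hb), sq_nonneg (√(S + b) - √S)]

/-- Scalar adaptive-gradient inequality (Lemma 4 of Duchi–Hazan–Singer): for nonnegative
reals `a_1, …, a_T`, `∑_{t=1}^T a_t / √(a_1 + ⋯ + a_t) ≤ 2√(a_1 + ⋯ + a_T)`, where a term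
with zero denominator is interpreted as `0` (division by zero in `ℝ` yields `0`). -/
theorem sum_div_sqrt_partial_sum_le {T : ℕ} (a : ℕ → ℝ)
    (ha : ∀ t ∈ Finset.Icc 1 T, 0 ≤ a t) :
    ∑ t ∈ Finset.Icc 1 T, a t / Real.sqrt (∑ s ∈ Finset.Icc 1 t, a s)
      ≤ 2 * Real.sqrt (∑ t ∈ Finset.Icc 1 T, a t) := by
  induction T with
  | zero => simp
  | succ n ih =>
    have ha' : ∀ t ∈ Finset.Icc 1 n, 0 ≤ a t := fun t ht =>
      ha t (Finset.Icc_subset_Icc_right n.le_succ ht)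
    have hstep := div_sqrt_add_le (Finset.sum_nonneg ha') (ha (n + 1) (by simp))
    have hn : 1 ≤ n + 1 := by omega
    rw [Finset.sum_Icc_succ_top hn, Finset.sum_Icc_succ_top hn]
    linarith [ih ha']
end

section
/- Let g_1, …, g_T ∈ ℝ^d, let a > 0, and for each t set s_t ∈ ℝ^d with coordinates s_{t,i} = ‖g_{1:t,i}‖. Then ∑_{t=1}^T ⟨g_t, (aI + diag(s_t))⁻¹ g_t⟩ = ∑_{t=1}^T ∑_{i=1}^d g_{t,i}²/(a + ‖g_{1:t,i}‖) ≤ 2 ∑_{i=1}^d ‖g_{1:T,i}‖. -/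
open Matrix Finset

/-!
The matrix `aI + diag(s_t)` is diagonal with positive entries, so it is inverted entrywise, which
gives the equality. For the inequality, exchange the sums and treat each coordinate separately:
with `v = ‖x_{1:t-1}‖ ≤ u = ‖x_{1:t}‖` we have
`x_t² = u² - v² = (u - v)(u + v) ≤ 2 (u - v)(a + u)`, so that `x_t² / (a + u) ≤ 2 (u - v)`, and the
right-hand sides telescope.
-/

/-- The bound for a single coordinate, by telescoping. -/
lemma sum_sq_div_add_sqrt_le (x : ℕ → ℝ) (a : ℝ) (ha : 0 < a) (T : ℕ) :
    ∑ t ∈ Finset.Icc 1 T, x t ^ 2 / (a + Real.sqrt (∑ r ∈ Finset.Icc 1 t, x r ^ 2))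
      ≤ 2 * Real.sqrt (∑ r ∈ Finset.Icc 1 T, x r ^ 2) := by
  induction T with
  | zero => simp
  | succ n ih =>
    rw [Finset.sum_Icc_succ_top (Nat.le_add_left 1 n)]
    have hS : 0 ≤ ∑ r ∈ Finset.Icc 1 n, x r ^ 2 := Finset.sum_nonneg fun _ _ => sq_nonneg _
    have hsum : ∑ r ∈ Finset.Icc 1 (n + 1), x r ^ 2
        = ∑ r ∈ Finset.Icc 1 n, x r ^ 2 + x (n + 1) ^ 2 :=
      Finset.sum_Icc_succ_top (Nat.le_add_left 1 n) _
    have hS' : 0 ≤ ∑ r ∈ Finset.Icc 1 (n + 1), x r ^ 2 :=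
      Finset.sum_nonneg fun _ _ => sq_nonneg _
    have hu2 := Real.sq_sqrt hS'
    have hv2 := Real.sq_sqrt hS
    have hvu : Real.sqrt (∑ r ∈ Finset.Icc 1 n, x r ^ 2)
        ≤ Real.sqrt (∑ r ∈ Finset.Icc 1 (n + 1), x r ^ 2) :=
      Real.sqrt_le_sqrt (by rw [hsum]; linarith [sq_nonneg (x (n + 1))])
    have hv := Real.sqrt_nonneg (∑ r ∈ Finset.Icc 1 n, x r ^ 2)
    set u := Real.sqrt (∑ r ∈ Finset.Icc 1 (n + 1), x r ^ 2)
    set v := Real.sqrt (∑ r ∈ Finset.Icc 1 n, x r ^ 2)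
    have hstep : x (n + 1) ^ 2 / (a + u) ≤ 2 * (u - v) := by
      rw [div_le_iff₀ (by linarith)]
      nlinarith [mul_nonneg (sub_nonneg.2 hvu) ha.le, mul_self_nonneg (u - v)]
    linarith

/-- Gradient-norm bound for adaptive stochastic ADMM with diagonal matrix update
`H_t = aI + diag(s_t)`, `s_{t,i} = ‖g_{1:t,i}‖`:
`∑_t ⟨g_t, (aI + diag(s_t))⁻¹ g_t⟩ = ∑_t ∑_i g_{t,i}²/(a + ‖g_{1:t,i}‖) ≤ 2∑_i ‖g_{1:T,i}‖`. -/
theorem adagrad_diag_gradient_bound {T d : ℕ} (g : ℕ → Fin d → ℝ) (a : ℝ) (ha : 0 < a) :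
    (∑ t ∈ Finset.Icc 1 T,
        g t ⬝ᵥ (a • (1 : Matrix (Fin d) (Fin d) ℝ)
            + Matrix.diagonal (fun i => Real.sqrt (∑ r ∈ Finset.Icc 1 t, g r i ^ 2)))⁻¹.mulVec
          (g t))
      = ∑ t ∈ Finset.Icc 1 T, ∑ i,
          g t i ^ 2 / (a + Real.sqrt (∑ r ∈ Finset.Icc 1 t, g r i ^ 2)) ∧
    (∑ t ∈ Finset.Icc 1 T, ∑ i,
        g t i ^ 2 / (a + Real.sqrt (∑ r ∈ Finset.Icc 1 t, g r i ^ 2)))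
      ≤ 2 * ∑ i, Real.sqrt (∑ r ∈ Finset.Icc 1 T, g r i ^ 2) := by
  constructor
  · refine Finset.sum_congr rfl fun t _ => ?_
    have hpos : ∀ i, 0 < a + Real.sqrt (∑ r ∈ Finset.Icc 1 t, g r i ^ 2) := fun i =>
      add_pos_of_pos_of_nonneg ha (Real.sqrt_nonneg _)
    have hinv : (a • (1 : Matrix (Fin d) (Fin d) ℝ)
        + Matrix.diagonal (fun i => Real.sqrt (∑ r ∈ Finset.Icc 1 t, g r i ^ 2)))⁻¹
        = Matrix.diagonal
            (fun i => (a + Real.sqrt (∑ r ∈ Finset.Icc 1 t, g r i ^ 2))⁻¹) := by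
      apply Matrix.inv_eq_right_inv
      rw [Matrix.smul_one_eq_diagonal, Matrix.diagonal_add, Matrix.diagonal_mul_diagonal,
        ← Matrix.diagonal_one]
      congr 1
      funext i
      exact mul_inv_cancel₀ (hpos i).ne'
    rw [hinv]
    refine Finset.sum_congr rfl fun i _ => ?_
    rw [Matrix.mulVec_diagonal, div_eq_mul_inv]
    ring
  · rw [Finset.sum_comm, Finset.mul_sum]
    exact Finset.sum_le_sum fun i _ => sum_sq_div_add_sqrt_le (fun t => g t i) a ha T
end

section
/- Let s_1, …, s_T ∈ ℝ^d be coordinatewise nonnegative and nondecreasing (0 ≤ s_{t,i} ≤ s_{t+1,i} for all t < T and all i), set H_t = diag(s_t), and let x_1, …, x_{T+1}, x* ∈ ℝ^d. Then ∑_{t=1}^T (‖x_t − x*‖²_{H_t} − ‖x_{t+1} − x*‖²_{H_t}) ≤ (max_{1 ≤ t ≤ T} ‖x_t − x*‖²_∞) · ∑_{i=1}^d s_{T,i}. -/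
/-!
With `H = diag(s)` the squared norm is `‖v‖²_H = ∑ i, s i * v i ^ 2`, so the bound decouples into
one scalar inequality per coordinate. For a fixed coordinate, with `a t = (x_t - x*)_i ^ 2 ≤ M`,
summation by parts gives
`∑_{t ≤ T} s_t (a_t - a_{t+1}) = s_1 a_1 + ∑_{1 < t ≤ T} (s_t - s_{t-1}) a_t - s_T a_{T+1}`, and
replacing each `a_t` with `t ≤ T` by `M` telescopes to at most `M s_T - s_T a_{T+1} ≤ M s_T`.
The scalar inequality is `sum_mul_sub_le`, proved by induction on `T`.
-/

open Matrix Finset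

lemma normHsq_diagonal {n : ℕ} (s v : Fin n → ℝ) :
    normHsq (Matrix.diagonal s) v = ∑ i, s i * v i ^ 2 := by
  simp only [normHsq, dotProduct, Matrix.mulVec_diagonal]
  exact Finset.sum_congr rfl fun i _ => by ring

/-- The one-coordinate Abel summation bound. The term `- s T * a (T + 1)` is kept on the right
because the induction needs it. -/
lemma sum_mul_sub_le {T : ℕ} (hT : 1 ≤ T) (s a : ℕ → ℝ) (M : ℝ) (h1 : 0 ≤ s 1)
    (hmono : ∀ t, 1 ≤ t → t < T → s t ≤ s (t + 1))
    (ha : ∀ t, 1 ≤ t → t ≤ T → a t ≤ M) :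
    ∑ t ∈ Finset.Icc 1 T, (s t * a t - s t * a (t + 1)) ≤ M * s T - s T * a (T + 1) := by
  induction T, hT using Nat.le_induction with
  | base =>
    simp only [Finset.Icc_self, Finset.sum_singleton]
    nlinarith [mul_le_mul_of_nonneg_left (ha 1 le_rfl le_rfl) h1]
  | succ n hn ih =>
    rw [Finset.sum_Icc_succ_top (by omega)]
    have h := ih (fun t h h' => hmono t h (by omega)) (fun t h h' => ha t h (by omega))
    have hs := hmono n hn (by omega)
    have hM := ha (n + 1) (by omega) le_rfl
    nlinarith [mul_nonneg (sub_nonneg.2 hs) (sub_nonneg.2 hM)]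

/-- Telescoping Bregman-divergence bound for diagonal proximal matrices: if
`s_1, …, s_T ∈ ℝ^d` are coordinatewise nonnegative and nondecreasing and `H_t = diag(s_t)`,
then `∑_{t=1}^T (‖x_t − x*‖²_{H_t} − ‖x_{t+1} − x*‖²_{H_t})
  ≤ (max_{1≤t≤T} ‖x_t − x*‖²_∞) ∑_i s_{T,i}`.
(The norm `‖·‖` on `Fin d → ℝ` below is the sup-norm.) -/
theorem telescoping_diag_bound {d T : ℕ} (hT : 1 ≤ T)
    (s : ℕ → Fin d → ℝ)
    (hnn : ∀ t ∈ Finset.Icc 1 T, ∀ i, 0 ≤ s t i)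
    (hmono : ∀ t, 1 ≤ t → t < T → ∀ i, s t i ≤ s (t + 1) i)
    (x : ℕ → Fin d → ℝ) (xstar : Fin d → ℝ) :
    ∑ t ∈ Finset.Icc 1 T,
        (normHsq (Matrix.diagonal (s t)) (x t - xstar)
          - normHsq (Matrix.diagonal (s t)) (x (t + 1) - xstar))
      ≤ ((Finset.Icc 1 T).sup' (Finset.nonempty_Icc.mpr hT)
            (fun t => ‖x t - xstar‖ ^ 2)) * ∑ i, s T i := by
  set M := (Finset.Icc 1 T).sup' (Finset.nonempty_Icc.mpr hT) (fun t => ‖x t - xstar‖ ^ 2)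
    with hM
  have ha : ∀ i t, 1 ≤ t → t ≤ T → (x t - xstar) i ^ 2 ≤ M := fun i t h h' => by
    have hsup : ‖x t - xstar‖ ^ 2 ≤ M :=
      Finset.le_sup' (fun t => ‖x t - xstar‖ ^ 2) (Finset.mem_Icc.2 ⟨h, h'⟩)
    refine le_trans ?_ hsup
    rw [← sq_abs, ← Real.norm_eq_abs]
    exact pow_le_pow_left₀ (norm_nonneg _) (norm_le_pi_norm (x t - xstar) i) 2
  simp only [normHsq_diagonal, ← Finset.sum_sub_distrib]
  rw [Finset.sum_comm, Finset.mul_sum]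
  refine Finset.sum_le_sum fun i _ => ?_
  have h := sum_mul_sub_le hT (fun t => s t i) (fun t => (x t - xstar) i ^ 2) M
    (hnn 1 (Finset.mem_Icc.2 ⟨le_rfl, hT⟩) i) (fun t h h' => hmono t h h' i) (ha i)
  have hlast : 0 ≤ s T i * (x (T + 1) - xstar) i ^ 2 :=
    mul_nonneg (hnn T (Finset.mem_Icc.2 ⟨hT, le_rfl⟩) i) (sq_nonneg _)
  exact h.trans (sub_le_self _ hlast)
end
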